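/- Let T(n,k) be the number of Stirling permutations σ ∈ Q_n with fap(σ) = k (and set T(n,k) = 0 for k < 0). Then for all n ≥ 0 and all integers k ≥ 0, T(n+1,k) = k·T(n,k) + T(n,k−1) + (2n−k+2)·T(n,k−2), with initial conditions T(0,0) = 1 and T(1,1) = 1, T(1,k) = 0 for k ≠ 1. -/

import Mathlib

open Finset MvPolynomial

/-- Stirling permutations of order `n`, encoded as functions `Fin (2*n) → Fin (n+1)`
in one-line notation (position `i` holds the letter `σ (i) ∈ {1,…,n}`), such that each
letter `1,…,n` occurs exactly twice and all entries between the two occurrences of a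
letter are larger than that letter. -/
def StirlingSet (n : ℕ) : Finset (Fin (2*n) → Fin (n+1)) :=
  Finset.univ.filter (fun σ =>
    (∀ v : Fin (n+1), (v : ℕ) ≠ 0 →
        (Finset.univ.filter (fun i => σ i = v)).card = 2) ∧
    (∀ i j k : Fin (2*n), i < j → j < k → σ i = σ k → σ i < σ j))

/-- The letter at position `i ∈ {1,…,2n}` of a Stirling permutation, with the
convention that positions outside this range (in particular position `0`) hold `0`. -/
def sval {n : ℕ} (σ : Fin (2*n) → Fin (n+1)) (i : ℕ) : ℕ :=
  if h : 1 ≤ i ∧ i ≤ 2*n then (σ ⟨i - 1, by omega⟩ : ℕ) else 0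

/-- The number of ascent-plateaus: indices `2 ≤ i ≤ 2n-1` with `σ_{i-1} < σ_i = σ_{i+1}`. -/
def apQ {n : ℕ} (σ : Fin (2*n) → Fin (n+1)) : ℕ :=
  ((Finset.Icc 2 (2*n - 1)).filter
    (fun i => sval σ (i-1) < sval σ i ∧ sval σ i = sval σ (i+1))).card

/-- The number of left ascent-plateaus: indices `1 ≤ i ≤ 2n-1` with
`σ_{i-1} < σ_i = σ_{i+1}`, where `σ_0 = 0`. -/
def lapQ {n : ℕ} (σ : Fin (2*n) → Fin (n+1)) : ℕ :=
  ((Finset.Icc 1 (2*n - 1)).filter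
    (fun i => sval σ (i-1) < sval σ i ∧ sval σ i = sval σ (i+1))).card

/-- The number of double ascents: indices `1 ≤ i ≤ 2n-1` with
`σ_{i-1} < σ_i < σ_{i+1}`, where `σ_0 = 0`. -/
def dascQ {n : ℕ} (σ : Fin (2*n) → Fin (n+1)) : ℕ :=
  ((Finset.Icc 1 (2*n - 1)).filter
    (fun i => sval σ (i-1) < sval σ i ∧ sval σ i < sval σ (i+1))).card

/-- The number of descent-plateaus: indices `2 ≤ i ≤ 2n-1` with
`σ_{i-1} > σ_i = σ_{i+1}`. -/
def dpQ {n : ℕ} (σ : Fin (2*n) → Fin (n+1)) : ℕ :=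
  ((Finset.Icc 2 (2*n - 1)).filter
    (fun i => sval σ i < sval σ (i-1) ∧ sval σ i = sval σ (i+1))).card

/-- The number of ascents: indices `1 ≤ i ≤ 2n-1` with `σ_i < σ_{i+1}` or `i = 1`. -/
def ascQ {n : ℕ} (σ : Fin (2*n) → Fin (n+1)) : ℕ :=
  ((Finset.Icc 1 (2*n - 1)).filter
    (fun i => sval σ i < sval σ (i+1) ∨ i = 1)).card

/-- The number of plateaus: indices `1 ≤ i ≤ 2n-1` with `σ_i = σ_{i+1}`. -/
def platQ {n : ℕ} (σ : Fin (2*n) → Fin (n+1)) : ℕ :=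
  ((Finset.Icc 1 (2*n - 1)).filter (fun i => sval σ i = sval σ (i+1))).card

/-- The flag ascent-plateau number: `2·ap(σ)+1` if `σ_1 = σ_2`, and `2·ap(σ)` otherwise. -/
def fapQ {n : ℕ} (σ : Fin (2*n) → Fin (n+1)) : ℕ :=
  if 1 ≤ n ∧ sval σ 1 = sval σ 2 then 2 * apQ σ + 1 else 2 * apQ σ

/-- `T(n,k)`: the number of Stirling permutations of order `n` with flag
ascent-plateau number `k`, extended by `0` for negative `k`. -/
def Tnum (n : ℕ) (k : ℤ) : ℤ :=
  if 0 ≤ k then ((StirlingSet n).filter (fun σ => (fapQ σ : ℤ) = k)).card else 0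

/-!
Every Stirling permutation of order `n + 1` arises from a unique `σ` of order `n` by inserting two
adjacent copies of `n + 1` into one of its `2 * n + 1` gaps. Prepend a letter `0` to `σ`: then
`fapQ σ` counts the ascent-plateaus of the resulting word, with weight `1` for one at the beginning
of `σ` and weight `2` for all others. The inserted pair is a new ascent-plateau, and it destroys the
old one, if any, whose pair it splits or immediately precedes. As two ascent-plateaus are never
adjacent, exactly `fapQ σ` of the gaps preserve `fapQ`, exactly one increases it by `1`, and the
remaining `2 * n - fapQ σ` increase it by `2`.
-/

section BigOperators

variable {ι M : Type*} [DecidableEq ι] [AddCommMonoid M]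

theorem sum_erase_add_ite (s : Finset ι) (f : ι → M) (a : ι) :
    ∑ i ∈ s.erase a, f i + (if a ∈ s then f a else 0) = ∑ i ∈ s, f i := by
  split_ifs with ha
  · exact sum_erase_add s f ha
  · rw [erase_eq_of_notMem ha, add_zero]

theorem sum_ite_mem_ite_eq {s t : Finset ι} {a : ι} (hsub : insert a t ⊆ s) (ha : a ∉ t)
    (x y z : M) :
    ∑ i ∈ s, (if i ∈ t then x else if i = a then y else z) =
      #t • x + y + #(s \ insert a t) • z := by
  have hin : ∀ i ∈ t, (if i ∈ t then x else if i = a then y else z) = x :=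
    fun i hi => if_pos hi
  have hout : ∀ i ∈ s \ insert a t, (if i ∈ t then x else if i = a then y else z) = z := by
    intro i hi
    obtain ⟨-, hne, hnot⟩ : i ∈ s ∧ i ≠ a ∧ i ∉ t := by simpa using hi
    rw [if_neg hnot, if_neg hne]
  rw [← sum_sdiff hsub, sum_insert ha, sum_eq_card_nsmul hin, sum_eq_card_nsmul hout, if_neg ha,
    if_pos rfl]
  abel

end BigOperators

section Insertion

/-- A word is nested when all entries strictly between two occurrences of a letter exceed that
letter. -/
def IsNested {ι α : Type*} [LT ι] [LT α] (σ : ι → α) : Prop :=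
  ∀ ⦃i j k⦄, i < j → j < k → σ i = σ k → σ i < σ j

variable {m k : ℕ}

/-- The positions left for the old letters after a pair of adjacent letters has been inserted at
the gap `p`: the pair occupies the positions `p.castSucc` and `p.succ`. -/
def skipPair (p : Fin (m + 1)) : Fin m ↪o Fin (m + 2) :=
  p.succAboveOrderEmb.trans p.castSucc.succAboveOrderEmb

/-- Insert two adjacent copies of a new largest letter into the gap `p`, that is, after the first
`p` letters. -/
def insertMax (σ : Fin m → Fin k) (p : Fin (m + 1)) : Fin (m + 2) → Fin (k + 1) :=
  p.castSucc.insertNth (Fin.last k) (p.insertNth (Fin.last k) fun i => (σ i).castSucc)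

theorem skipPair_cases (p : Fin (m + 1)) (i : Fin (m + 2)) :
    i = p.castSucc ∨ i = p.succ ∨ ∃ j, i = skipPair p j := by
  obtain rfl | ⟨i, rfl⟩ := Fin.eq_self_or_eq_succAbove p.castSucc i
  · exact .inl rfl
  obtain rfl | ⟨i, rfl⟩ := Fin.eq_self_or_eq_succAbove p i
  · exact .inr (.inl (Fin.succAbove_castSucc_self _))
  · exact .inr (.inr ⟨i, rfl⟩)

theorem skipPair_ne_castSucc (p : Fin (m + 1)) (j : Fin m) : skipPair p j ≠ p.castSucc :=
  Fin.succAbove_ne _ _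

theorem skipPair_ne_succ (p : Fin (m + 1)) (j : Fin m) : skipPair p j ≠ p.succ := by
  rw [← Fin.succAbove_castSucc_self]
  exact Fin.succAbove_right_injective.ne (Fin.succAbove_ne p j)

@[simp]
theorem insertMax_castSucc (σ : Fin m → Fin k) (p : Fin (m + 1)) :
    insertMax σ p p.castSucc = Fin.last k :=
  Fin.insertNth_apply_same ..

@[simp]
theorem insertMax_succ (σ : Fin m → Fin k) (p : Fin (m + 1)) :
    insertMax σ p p.succ = Fin.last k := by
  rw [insertMax, ← Fin.succAbove_castSucc_self, Fin.insertNth_apply_succAbove,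
    Fin.insertNth_apply_same]

@[simp]
theorem insertMax_skipPair (σ : Fin m → Fin k) (p : Fin (m + 1)) (j : Fin m) :
    insertMax σ p (skipPair p j) = (σ j).castSucc :=
  (Fin.insertNth_apply_succAbove ..).trans (Fin.insertNth_apply_succAbove ..)

theorem insertMax_eq_iff {σ : Fin m → Fin k} {p : Fin (m + 1)} {τ : Fin (m + 2) → Fin (k + 1)} :
    insertMax σ p = τ ↔ τ p.castSucc = Fin.last k ∧ τ p.succ = Fin.last k ∧
      ∀ j, τ (skipPair p j) = (σ j).castSucc := by
  refine ⟨by rintro rfl; simp, fun ⟨hcast, hsucc, hskip⟩ => funext fun i => ?_⟩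
  obtain rfl | rfl | ⟨j, rfl⟩ := skipPair_cases p i <;>
    simp only [insertMax_castSucc, insertMax_succ, insertMax_skipPair, hcast, hsucc, hskip]

theorem insertMax_eq_last_iff {σ : Fin m → Fin k} {p : Fin (m + 1)} {i : Fin (m + 2)} :
    insertMax σ p i = Fin.last k ↔ i = p.castSucc ∨ i = p.succ := by
  refine ⟨fun h => ?_, by rintro (rfl | rfl) <;> simp⟩
  obtain rfl | rfl | ⟨j, rfl⟩ := skipPair_cases p i
  · exact .inl rfl
  · exact .inr rfl
  · simp [Fin.castSucc_ne_last] at h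

theorem exists_skipPair_eq_of_insertMax_ne_last {σ : Fin m → Fin k} {p : Fin (m + 1)}
    {i : Fin (m + 2)} (h : insertMax σ p i ≠ Fin.last k) : ∃ j, skipPair p j = i := by
  rw [Ne, insertMax_eq_last_iff, not_or] at h
  obtain ⟨j, rfl⟩ := ((skipPair_cases p i).resolve_left h.1).resolve_left h.2
  exact ⟨j, rfl⟩

theorem insertMax_injective2 : Function.Injective2 (insertMax (m := m) (k := k)) := by
  intro σ τ p q h
  have hp : p.castSucc = q.castSucc ∨ p.castSucc = q.succ := by
    rw [← insertMax_eq_last_iff (σ := τ), ← h, insertMax_castSucc]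
  have hq : q.castSucc = p.castSucc ∨ q.castSucc = p.succ := by
    rw [← insertMax_eq_last_iff (σ := σ), h, insertMax_castSucc]
  obtain rfl : p = q := by
    simp only [Fin.ext_iff, Fin.val_castSucc, Fin.val_succ] at hp hq ⊢
    omega
  refine ⟨funext fun j => Fin.castSucc_injective _ ?_, rfl⟩
  rw [← insertMax_skipPair σ p, h, insertMax_skipPair]

theorem card_insertMax_eq_last (σ : Fin m → Fin k) (p : Fin (m + 1)) :
    #{i | insertMax σ p i = Fin.last k} = 2 := by
  have hfiber : ({i | insertMax σ p i = Fin.last k} : Finset _) = {p.castSucc, p.succ} := by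
    ext i
    simp [insertMax_eq_last_iff]
  rw [hfiber, card_pair Fin.castSucc_lt_succ.ne]

theorem card_insertMax_eq_castSucc (σ : Fin m → Fin k) (p : Fin (m + 1)) (v : Fin k) :
    #{i | insertMax σ p i = v.castSucc} = #{j | σ j = v} := by
  have hskip (j : Fin m) : p.castSucc.succAbove (p.succAbove j) = skipPair p j := rfl
  rw [card_filter, card_filter, Fin.sum_univ_succAbove _ p.castSucc, Fin.sum_univ_succAbove _ p]
  simp [hskip, (Fin.castSucc_ne_last v).symm]

theorem isNested_insertMax_iff {σ : Fin m → Fin k} {p : Fin (m + 1)} :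
    IsNested (insertMax σ p) ↔ IsNested σ := by
  constructor
  · intro h i j l hij hjl hil
    simpa using h ((skipPair p).lt_iff_lt.2 hij) ((skipPair p).lt_iff_lt.2 hjl) (by simpa using hil)
  intro h i j l hij hjl hil
  by_cases hi : insertMax σ p i = Fin.last k
  · have hl := insertMax_eq_last_iff.1 (hil.symm.trans hi)
    rw [insertMax_eq_last_iff] at hi
    simp only [Fin.ext_iff, Fin.lt_def, Fin.val_castSucc, Fin.val_succ] at hi hl hij hjl
    omega
  by_cases hj : insertMax σ p j = Fin.last k
  · exact hj ▸ Fin.lt_last_iff_ne_last.2 hi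
  obtain ⟨l, rfl⟩ := exists_skipPair_eq_of_insertMax_ne_last (hil ▸ hi)
  obtain ⟨i, rfl⟩ := exists_skipPair_eq_of_insertMax_ne_last hi
  obtain ⟨j, rfl⟩ := exists_skipPair_eq_of_insertMax_ne_last hj
  simp only [insertMax_skipPair, Fin.castSucc_inj, Fin.castSucc_lt_castSucc_iff,
    (skipPair p).lt_iff_lt] at hij hjl hil ⊢
  exact h hij hjl hil

theorem IsNested.exists_insertMax_eq {τ : Fin (m + 2) → Fin (k + 1)} (hτ : IsNested τ)
    (hcard : #{i | τ i = Fin.last k} = 2) : ∃ σ p, insertMax σ p = τ := by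
  obtain ⟨a, b, hab, hfiber⟩ := card_eq_two.1 hcard
  wlog hlt : a < b generalizing a b
  · exact this b a hab.symm (by rw [hfiber, pair_comm]) (hab.lt_or_gt.resolve_left hlt)
  have hlast (i : Fin (m + 2)) : τ i = Fin.last k ↔ i = a ∨ i = b := by
    simpa using Finset.ext_iff.1 hfiber i
  obtain ⟨p, rfl⟩ := Fin.exists_castSucc_eq.2 (Fin.ne_last_of_lt hlt)
  obtain rfl : b = p.succ := by
    by_contra hne
    have hbetween : p.castSucc < p.succ ∧ p.succ < b :=
      ⟨Fin.castSucc_lt_succ, (Fin.castSucc_lt_iff_succ_le.1 hlt).lt_of_ne' hne⟩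
    have := hτ hbetween.1 hbetween.2 (by rw [(hlast _).2 (.inl rfl), (hlast _).2 (.inr rfl)])
    rw [(hlast _).2 (.inl rfl)] at this
    exact this.not_ge (Fin.le_last _)
  have hold (j : Fin m) : τ (skipPair p j) ≠ Fin.last k := by
    rw [Ne, hlast, not_or]
    exact ⟨skipPair_ne_castSucc p j, skipPair_ne_succ p j⟩
  exact ⟨fun j => (τ (skipPair p j)).castPred (hold j), p, insertMax_eq_iff.2 (by simp [hlast])⟩

end Insertion

section StirlingSet

variable {n : ℕ}

theorem mem_stirlingSet {σ : Fin (2 * n) → Fin (n + 1)} :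
    σ ∈ StirlingSet n ↔ (∀ v : Fin (n + 1), (v : ℕ) ≠ 0 → #{i | σ i = v} = 2) ∧ IsNested σ :=
  mem_filter_univ _

theorem insertMax_mem_stirlingSet {σ : Fin (2 * n) → Fin (n + 1)} {p : Fin (2 * n + 1)} :
    insertMax σ p ∈ StirlingSet (n + 1) ↔ σ ∈ StirlingSet n := by
  rw [mem_stirlingSet, mem_stirlingSet, Fin.forall_fin_succ']
  refine and_congr ⟨fun h v hv => ?_, fun h => ⟨fun v hv => ?_, fun _ => ?_⟩⟩ isNested_insertMax_iff
  · exact (card_insertMax_eq_castSucc σ p v).symm.trans (h.1 v hv)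
  · exact (card_insertMax_eq_castSucc σ p v).trans (h v hv)
  · exact card_insertMax_eq_last σ p

theorem stirlingSet_succ :
    StirlingSet (n + 1) = (StirlingSet n ×ˢ univ).image (Function.uncurry insertMax) := by
  ext τ
  simp only [mem_image, mem_product, mem_univ, and_true, Prod.exists, Function.uncurry]
  constructor
  · intro hτ
    obtain ⟨hcard, hnest⟩ := mem_stirlingSet.1 hτ
    obtain ⟨σ, p, rfl⟩ := hnest.exists_insertMax_eq (hcard (Fin.last _) (Nat.succ_ne_zero n))
    exact ⟨σ, p, insertMax_mem_stirlingSet.1 hτ, rfl⟩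
  · rintro ⟨σ, p, hσ, rfl⟩
    exact insertMax_mem_stirlingSet.2 hσ

theorem sum_stirlingSet_succ {M : Type*} [AddCommMonoid M]
    (f : (Fin (2 * (n + 1)) → Fin (n + 1 + 1)) → M) :
    ∑ τ ∈ StirlingSet (n + 1), f τ = ∑ σ ∈ StirlingSet n, ∑ p, f (insertMax σ p) := by
  rw [stirlingSet_succ]
  exact (sum_image insertMax_injective2.uncurry.injOn).trans (sum_product ..)

theorem stirlingSet_zero : StirlingSet 0 = univ :=
  filter_true_of_mem fun _ _ => ⟨fun v hv => absurd v.isLt (by omega), fun i => i.elim0⟩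

theorem apply_ne_zero_of_mem_stirlingSet {σ : Fin (2 * n) → Fin (n + 1)} (hσ : σ ∈ StirlingSet n)
    (i : Fin (2 * n)) : σ i ≠ 0 := by
  have hcard : ∑ v, #{i | σ i = v} = 2 * n := by
    rw [← card_eq_sum_card_fiberwise (fun _ _ => mem_univ _), card_univ, Fintype.card_fin]
  have hsucc (v : Fin n) : #{i | σ i = v.succ} = 2 := (mem_stirlingSet.1 hσ).1 _ (by simp)
  simp only [Fin.sum_univ_succ, hsucc, sum_const, card_univ, Fintype.card_fin, smul_eq_mul] at hcard
  have hzero : #{i | σ i = 0} = 0 := by omega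
  simpa using filter_eq_empty_iff.1 (card_eq_zero.1 hzero) (mem_univ i)

end StirlingSet

section AscentPlateau

/-- The index `i` is an ascent-plateau of the word `w` when `w (i - 1) < w i = w (i + 1)`. The
index `0` never is one, because `0 - 1 = 0`. -/
def IsAscentPlateau {α : Type*} [LT α] (w : ℕ → α) (i : ℕ) : Prop :=
  w (i - 1) < w i ∧ w i = w (i + 1)

instance {α : Type*} [LT α] [DecidableLT α] [DecidableEq α] (w : ℕ → α) :
    DecidablePred (IsAscentPlateau w) :=
  fun _ => inferInstanceAs (Decidable (_ ∧ _))

/-- The counterpart of `skipPair` for positions numbered from `1`: the position, once a pair of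
letters has been inserted after the first `p` letters, of the letter formerly at position `i`. -/
def shiftPair (p i : ℕ) : ℕ :=
  if i ≤ p then i else i + 2

/-- Insert two adjacent copies of the letter `a` after the position `p` of the word `w`. -/
def insertPair {α : Type*} (a : α) (p : ℕ) (w : ℕ → α) (i : ℕ) : α :=
  if i ≤ p then w i else if i ≤ p + 2 then a else w (i - 2)

theorem shiftPair_injective (p : ℕ) : Function.Injective (shiftPair p) := by
  intro i j h
  unfold shiftPair at h
  split_ifs at h <;> omega

theorem shiftPair_cases (p i : ℕ) : i = p + 1 ∨ i = p + 2 ∨ ∃ j, i = shiftPair p j := by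
  by_cases hle : i ≤ p
  · exact .inr (.inr ⟨i, (if_pos hle).symm⟩)
  by_cases hgt : p + 2 < i
  · exact .inr (.inr ⟨i - 2, by rw [shiftPair, if_neg (by omega)]; omega⟩)
  · omega

theorem shiftPair_ne_add_one (p i : ℕ) : shiftPair p i ≠ p + 1 := by
  unfold shiftPair
  split_ifs <;> omega

theorem val_skipPair_add_one {m : ℕ} (p : Fin (m + 1)) (j : Fin m) :
    (skipPair p j : ℕ) + 1 = shiftPair p (j + 1) := by
  simp only [skipPair, shiftPair, Fin.succAbove, RelEmbedding.coe_trans, Function.comp_apply,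
    Fin.succAboveOrderEmb_apply, Fin.lt_def, Fin.val_castSucc]
  split_ifs <;> simp only [Fin.val_castSucc, Fin.val_succ] at * <;> omega

variable {α : Type*} {a : α} {p : ℕ} {w : ℕ → α}

@[simp]
theorem insertPair_add_one : insertPair a p w (p + 1) = a := by
  simp [insertPair]

@[simp]
theorem insertPair_add_two : insertPair a p w (p + 2) = a := by
  simp [insertPair]

@[simp]
theorem insertPair_shiftPair (i : ℕ) : insertPair a p w (shiftPair p i) = w i := by
  unfold insertPair shiftPair
  split_ifs <;> first | rfl | omega

variable [Preorder α]

theorem isAscentPlateau_insertPair_add_one (hp : w p < a) :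
    IsAscentPlateau (insertPair a p w) (p + 1) := by
  simpa [IsAscentPlateau, insertPair] using hp

theorem not_isAscentPlateau_insertPair_add_two : ¬IsAscentPlateau (insertPair a p w) (p + 2) := by
  simp [IsAscentPlateau]

theorem isAscentPlateau_insertPair_shiftPair (ha : ∀ i, w i < a) {i : ℕ} :
    IsAscentPlateau (insertPair a p w) (shiftPair p i) ↔
      IsAscentPlateau w i ∧ i ≠ p ∧ i ≠ p + 1 := by
  unfold IsAscentPlateau
  rw [insertPair_shiftPair]
  by_cases hip : i = p
  · have hnext : shiftPair p i + 1 = p + 1 := by simp [shiftPair, hip]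
    rw [hnext, insertPair_add_one]
    simp [hip, (ha p).ne]
  by_cases hip' : i = p + 1
  · have hprev : shiftPair p i - 1 = p + 2 := by simp [shiftPair, hip']
    rw [hprev, insertPair_add_two]
    simp [hip', (ha (p + 1)).not_gt]
  have hprev : shiftPair p i - 1 = shiftPair p (i - 1) := by
    unfold shiftPair
    split_ifs <;> omega
  have hnext : shiftPair p i + 1 = shiftPair p (i + 1) := by
    unfold shiftPair
    split_ifs <;> omega
  rw [hprev, hnext, insertPair_shiftPair, insertPair_shiftPair]
  simp [hip, hip']

theorem isAscentPlateau_insertPair_iff (ha : ∀ i, w i < a) {i : ℕ} :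
    IsAscentPlateau (insertPair a p w) i ↔
      i = p + 1 ∨ ∃ j, (IsAscentPlateau w j ∧ j ≠ p ∧ j ≠ p + 1) ∧ shiftPair p j = i := by
  constructor
  · intro h
    obtain rfl | rfl | ⟨j, rfl⟩ := shiftPair_cases p i
    · exact .inl rfl
    · exact (not_isAscentPlateau_insertPair_add_two h).elim
    · exact .inr ⟨j, (isAscentPlateau_insertPair_shiftPair ha).1 h, rfl⟩
  · rintro (rfl | ⟨j, hj, rfl⟩)
    · exact isAscentPlateau_insertPair_add_one (ha p)
    · exact (isAscentPlateau_insertPair_shiftPair ha).2 hj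

theorem IsAscentPlateau.not_add_one {i : ℕ} (h : IsAscentPlateau w i) :
    ¬IsAscentPlateau w (i + 1) :=
  fun h' => h'.1.ne h.2

end AscentPlateau

section sval

variable {n : ℕ} (σ : Fin (2 * n) → Fin (n + 1))

theorem sval_lt (i : ℕ) : sval σ i < n + 1 := by
  unfold sval
  split_ifs <;> omega

@[simp]
theorem sval_zero : sval σ 0 = 0 := by
  simp [sval]

theorem sval_val_add_one (i : Fin (2 * n)) : sval σ (i + 1) = σ i :=
  dif_pos (by omega)

theorem sval_eq_zero_of_lt {i : ℕ} (hi : 2 * n < i) : sval σ i = 0 :=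
  dif_neg (by omega)

theorem sval_insertMax (p : Fin (2 * n + 1)) :
    sval (n := n + 1) (insertMax σ p) = insertPair (n + 1) p (sval σ) := by
  have hsval (x : Fin (2 * n + 2)) := sval_val_add_one (n := n + 1) (insertMax σ p) x
  funext i
  obtain rfl | rfl | ⟨j, rfl⟩ := shiftPair_cases p i
  · simpa using hsval p.castSucc
  · simpa using hsval p.succ
  rw [insertPair_shiftPair]
  obtain rfl | hj := Nat.eq_zero_or_pos j
  · simp [shiftPair]
  obtain hgt | hle := lt_or_ge (2 * n) j
  · rw [sval_eq_zero_of_lt _ hgt, sval_eq_zero_of_lt _ (by rw [shiftPair, if_neg] <;> omega)]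
  obtain ⟨j, rfl⟩ : ∃ x : Fin (2 * n), j = x + 1 := ⟨⟨j - 1, by omega⟩, by simp; omega⟩
  rw [← val_skipPair_add_one, hsval, sval_val_add_one, insertMax_skipPair, Fin.val_castSucc]

variable {σ} in
theorem sval_pos_of_mem_stirlingSet (hσ : σ ∈ StirlingSet n) {i : ℕ} (h₁ : 1 ≤ i)
    (h₂ : i ≤ 2 * n) : 0 < sval σ i := by
  rw [sval, dif_pos ⟨h₁, h₂⟩]
  exact Fin.pos_iff_ne_zero.2 (apply_ne_zero_of_mem_stirlingSet hσ _)

end sval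

section FlagAscentPlateau

variable {n : ℕ} (σ : Fin (2 * n) → Fin (n + 1))

/-- The set of left ascent-plateaus of `σ`, counted by `lapQ`; those other than `1` are the
ascent-plateaus. -/
def ascentPlateaus : Finset ℕ :=
  {i ∈ Icc 1 (2 * n - 1) | IsAscentPlateau (sval σ) i}

/-- The contribution of a left ascent-plateau to `fapQ`. -/
def plateauWeight (i : ℕ) : ℕ :=
  if i = 1 then 1 else 2

/-- The gaps, numbered from `0` to `2 * n`, whose filling by a pair of maximal letters preserves
`fapQ`: the gaps `i - 1` and `i` for each left ascent-plateau `i`, except the gap `1` when `i = 1`.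
-/
def stableGaps : Finset ℕ :=
  (ascentPlateaus σ).image (· - 1) ∪ (ascentPlateaus σ).erase 1

/-- The gap whose filling by a pair of maximal letters increases `fapQ` by exactly `1`. -/
def flagGap : ℕ :=
  if 1 ∈ ascentPlateaus σ then 1 else 0

variable {σ}

theorem mem_ascentPlateaus {i : ℕ} : i ∈ ascentPlateaus σ ↔ IsAscentPlateau (sval σ) i := by
  rw [ascentPlateaus, mem_filter, and_iff_right_iff_imp, mem_Icc]
  intro h
  have hpos : 0 < sval σ i := h.1.pos
  refine ⟨Nat.pos_of_ne_zero ?_, Nat.le_sub_one_of_lt <| lt_of_not_ge fun hi => ?_⟩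
  · rintro rfl
    simp at hpos
  · rw [h.2, sval_eq_zero_of_lt σ (by omega)] at hpos
    exact hpos.false

theorem add_one_notMem_ascentPlateaus {i : ℕ} (hi : i ∈ ascentPlateaus σ) :
    i + 1 ∉ ascentPlateaus σ :=
  fun h => (mem_ascentPlateaus.1 hi).not_add_one (mem_ascentPlateaus.1 h)

theorem ascentPlateaus_subset : ascentPlateaus σ ⊆ Icc 1 (2 * n - 1) :=
  filter_subset ..

theorem one_le_of_mem_ascentPlateaus {i : ℕ} (hi : i ∈ ascentPlateaus σ) : 1 ≤ i :=
  (mem_Icc.1 (ascentPlateaus_subset hi)).1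

theorem zero_notMem_ascentPlateaus : 0 ∉ ascentPlateaus σ :=
  fun h => Nat.not_succ_le_zero 0 (one_le_of_mem_ascentPlateaus h)

theorem one_mem_ascentPlateaus_iff (hσ : σ ∈ StirlingSet n) :
    1 ∈ ascentPlateaus σ ↔ 1 ≤ n ∧ sval σ 1 = sval σ 2 := by
  constructor
  · intro h
    have := mem_Icc.1 (ascentPlateaus_subset h)
    exact ⟨by omega, (mem_ascentPlateaus.1 h).2⟩
  · rintro ⟨hn, heq⟩
    refine mem_ascentPlateaus.2 ⟨?_, heq⟩
    simpa using sval_pos_of_mem_stirlingSet hσ le_rfl (by omega)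

theorem apQ_eq_card_erase : apQ σ = #((ascentPlateaus σ).erase 1) := by
  unfold apQ ascentPlateaus
  congr 1
  ext i
  simp only [IsAscentPlateau, mem_filter, mem_erase, mem_Icc]
  grind

theorem fapQ_eq_lapQ_add_apQ (hσ : σ ∈ StirlingSet n) : fapQ σ = lapQ σ + apQ σ := by
  have hlap : lapQ σ = #(ascentPlateaus σ) := rfl
  simp only [fapQ, ← one_mem_ascentPlateaus_iff hσ, hlap, apQ_eq_card_erase]
  split_ifs with h
  · rw [← card_erase_add_one h]
    omega
  · rw [erase_eq_of_notMem h, two_mul]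

theorem fapQ_eq_sum_plateauWeight (hσ : σ ∈ StirlingSet n) :
    fapQ σ = ∑ i ∈ ascentPlateaus σ, plateauWeight i := by
  have hweight (i : ℕ) : plateauWeight i = 1 + if i ≠ 1 then 1 else 0 := by
    simp only [plateauWeight]
    split_ifs <;> trivial
  simp only [hweight, sum_add_distrib, ← card_filter, filter_ne', ← card_eq_sum_ones]
  rw [fapQ_eq_lapQ_add_apQ hσ, apQ_eq_card_erase]
  rfl

theorem ascentPlateaus_insertMax (σ : Fin (2 * n) → Fin (n + 1)) (p : Fin (2 * n + 1)) :
    ascentPlateaus (n := n + 1) (insertMax σ p) =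
      insert (p + 1 : ℕ) ((((ascentPlateaus σ).erase p).erase (p + 1)).image (shiftPair p)) := by
  ext i
  rw [mem_ascentPlateaus, sval_insertMax, isAscentPlateau_insertPair_iff (sval_lt σ)]
  simp only [mem_insert, mem_image, mem_erase, mem_ascentPlateaus]
  grind

theorem fapQ_insertMax_add (hσ : σ ∈ StirlingSet n) (p : Fin (2 * n + 1)) :
    fapQ (n := n + 1) (insertMax σ p) +
        (if (p : ℕ) ∈ ascentPlateaus σ then plateauWeight p else 0) +
        (if (p + 1 : ℕ) ∈ ascentPlateaus σ then plateauWeight (p + 1) else 0) =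
      fapQ σ + plateauWeight (p + 1) := by
  have hshift : ∀ i ∈ ((ascentPlateaus σ).erase p).erase (p + 1),
      plateauWeight (shiftPair p i) = plateauWeight i := by
    intro i hi
    have : i ≠ 0 := by
      rintro rfl
      simp [zero_notMem_ascentPlateaus] at hi
    have hip := ne_of_mem_erase hi
    unfold plateauWeight shiftPair
    split_ifs <;> omega
  have hnew : (p + 1 : ℕ) ∉ (((ascentPlateaus σ).erase p).erase (p + 1)).image (shiftPair p) := by
    simp [shiftPair_ne_add_one]
  rw [fapQ_eq_sum_plateauWeight (n := n + 1) (insertMax_mem_stirlingSet.2 hσ),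
    fapQ_eq_sum_plateauWeight hσ, ascentPlateaus_insertMax, sum_insert hnew,
    sum_image (shiftPair_injective p).injOn, sum_congr rfl hshift,
    ← sum_erase_add_ite (ascentPlateaus σ) _ (p : ℕ),
    ← sum_erase_add_ite ((ascentPlateaus σ).erase p) _ (p + 1)]
  simp only [mem_erase, Nat.succ_ne_self, ne_eq, not_false_eq_true, true_and]
  ring

theorem mem_stableGaps {p : ℕ} :
    p ∈ stableGaps σ ↔ p + 1 ∈ ascentPlateaus σ ∨ p ≠ 1 ∧ p ∈ ascentPlateaus σ := by
  simp only [stableGaps, mem_union, mem_image, mem_erase]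
  refine or_congr_left ⟨?_, fun h => ⟨p + 1, h, rfl⟩⟩
  rintro ⟨i, hi, rfl⟩
  rwa [Nat.sub_add_cancel (one_le_of_mem_ascentPlateaus hi)]

theorem card_stableGaps (hσ : σ ∈ StirlingSet n) : #(stableGaps σ) = fapQ σ := by
  have hinj : Set.InjOn (· - 1) (ascentPlateaus σ : Set ℕ) := by
    intro i hi j hj h
    have := one_le_of_mem_ascentPlateaus hi
    have := one_le_of_mem_ascentPlateaus hj
    simp only at h
    omega
  have hdisj : Disjoint ((ascentPlateaus σ).image (· - 1)) ((ascentPlateaus σ).erase 1) := by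
    rw [disjoint_left]
    rintro _ himage hi'
    obtain ⟨i, hi, rfl⟩ := mem_image.1 himage
    apply add_one_notMem_ascentPlateaus (mem_of_mem_erase hi')
    rwa [Nat.sub_add_cancel (one_le_of_mem_ascentPlateaus hi)]
  rw [stableGaps, card_union_of_disjoint hdisj, card_image_of_injOn hinj,
    fapQ_eq_lapQ_add_apQ hσ, apQ_eq_card_erase]
  rfl

theorem flagGap_notMem_stableGaps : flagGap σ ∉ stableGaps σ := by
  rw [mem_stableGaps, flagGap]
  split_ifs with h
  · simpa using add_one_notMem_ascentPlateaus h
  · simpa [h] using zero_notMem_ascentPlateaus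

theorem insert_flagGap_stableGaps_subset :
    insert (flagGap σ) (stableGaps σ) ⊆ range (2 * n + 1) := by
  have hbound {i : ℕ} (hi : i ∈ ascentPlateaus σ) : i < 2 * n := by
    have := mem_Icc.1 (ascentPlateaus_subset hi)
    omega
  refine insert_subset ?_ fun p hp => ?_ <;> rw [mem_range]
  · unfold flagGap
    split_ifs with h
    · exact (hbound h).trans (Nat.lt_succ_self _)
    · exact Nat.succ_pos _
  · obtain h | ⟨-, h⟩ := mem_stableGaps.1 hp <;> have := hbound h <;> omega

theorem fapQ_insertMax (hσ : σ ∈ StirlingSet n) (p : Fin (2 * n + 1)) :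
    fapQ (n := n + 1) (insertMax σ p) = fapQ σ +
      if (p : ℕ) ∈ stableGaps σ then 0 else if (p : ℕ) = flagGap σ then 1 else 2 := by
  have hadd := fapQ_insertMax_add hσ p
  have hzero := zero_notMem_ascentPlateaus (σ := σ)
  have hsucc := @add_one_notMem_ascentPlateaus n σ p
  simp only [mem_stableGaps, flagGap, plateauWeight] at *
  grind

theorem card_sdiff_insert_flagGap_stableGaps (hσ : σ ∈ StirlingSet n) :
    #(range (2 * n + 1) \ insert (flagGap σ) (stableGaps σ)) + fapQ σ = 2 * n := by
  have := card_sdiff_add_card_eq_card (insert_flagGap_stableGaps_subset (σ := σ))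
  rw [card_insert_of_notMem flagGap_notMem_stableGaps, card_stableGaps hσ, card_range] at this
  omega

theorem sum_fapQ_insertMax {R : Type*} [Ring R] (hσ : σ ∈ StirlingSet n) (f : ℕ → R) :
    ∑ p, f (fapQ (n := n + 1) (insertMax σ p)) =
      fapQ σ * f (fapQ σ) + f (fapQ σ + 1) + (2 * n - fapQ σ) * f (fapQ σ + 2) := by
  have hcard : (#(range (2 * n + 1) \ insert (flagGap σ) (stableGaps σ)) : R) =
      2 * n - fapQ σ := by
    rw [eq_sub_iff_add_eq]
    exact_mod_cast congrArg (Nat.cast (R := R)) (card_sdiff_insert_flagGap_stableGaps hσ)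
  calc ∑ p, f (fapQ (n := n + 1) (insertMax σ p))
      = ∑ p ∈ range (2 * n + 1), if p ∈ stableGaps σ then f (fapQ σ)
          else if p = flagGap σ then f (fapQ σ + 1) else f (fapQ σ + 2) := by
        rw [← Fin.sum_univ_eq_sum_range]
        refine sum_congr rfl fun p _ => ?_
        rw [fapQ_insertMax hσ]
        split_ifs <;> rfl
    _ = _ := by
        rw [sum_ite_mem_ite_eq insert_flagGap_stableGaps_subset flagGap_notMem_stableGaps,
          card_stableGaps hσ, nsmul_eq_mul, nsmul_eq_mul, hcard]

end FlagAscentPlateau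

theorem tnum_eq_sum (n : ℕ) (k : ℤ) :
    Tnum n k = ∑ σ ∈ StirlingSet n, if (fapQ σ : ℤ) = k then 1 else 0 := by
  unfold Tnum
  split_ifs with hk
  · exact (sum_boole ..).symm
  · exact (sum_eq_zero fun σ _ => if_neg (by omega)).symm

theorem tnum_succ (n : ℕ) (k : ℤ) :
    Tnum (n + 1) k =
      k * Tnum n k + Tnum n (k - 1) + (2 * (n : ℤ) - k + 2) * Tnum n (k - 2) := by
  simp only [tnum_eq_sum, sum_stirlingSet_succ, mul_sum, ← sum_add_distrib]
  refine sum_congr rfl fun σ hσ => ?_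
  rw [sum_fapQ_insertMax hσ fun j => if (j : ℤ) = k then 1 else 0]
  push_cast
  split_ifs <;> grind

theorem tnum_zero (k : ℤ) : Tnum 0 k = if k = 0 then 1 else 0 := by
  have hfap (σ : Fin (2 * 0) → Fin (0 + 1)) : fapQ σ = 0 := by simp [fapQ, apQ]
  simp [tnum_eq_sum, stirlingSet_zero, hfap, eq_comm]

theorem tnum_one (k : ℤ) : Tnum 1 k = if k = 1 then 1 else 0 := by
  rw [← Nat.zero_add 1, tnum_succ]
  simp only [tnum_zero]
  split_ifs <;> grind

theorem statement_7 :
    (∀ (n : ℕ) (k : ℤ), 0 ≤ k →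
        Tnum (n + 1) k =
          k * Tnum n k + Tnum n (k - 1) + (2 * (n : ℤ) - k + 2) * Tnum n (k - 2)) ∧
    Tnum 0 0 = 1 ∧ Tnum 1 1 = 1 ∧ ∀ k : ℤ, k ≠ 1 → Tnum 1 k = 0 :=
  ⟨fun n k _ => tnum_succ n k, by simp [tnum_zero], by simp [tnum_one],
    fun k hk => by simp [tnum_one, hk]⟩
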